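/- arXiv:2004.03778 — 2 statements merged into one kernel-verified Lean document; each statement's English description precedes it below -/
import Mathlib

section
/- Let n ≥ 3 and let R be a multiset of n−1 pairwise distinct nonzero complex numbers. Let S be the set of injective tuples λ = (λ₁,…,λₙ) ∈ ℂⁿ with λ₁+⋯+λₙ = 0 and λ₁⋯λₙ = 1 such that Q_λ(t) = ∏_{j=1}^{n}(t−λ_j) has n−1 pairwise distinct critical points and its multiset of critical values equals R. Then S is finite and the number of equivalence classes of S under the relation λ ∼ λ′ iff there exist ω ∈ ℂ with ωⁿ = 1 and a permutation π with λ′_i = ω·λ_{π(i)} is at most n^{n−3}. (Equivalently: for type II commode quasi-homogeneous functions, each non-degenerate value of the Henry–Parusiński invariant is realized by at most n^{n−3} distinct analytic equivalence classes.) -/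
/-!
Move the critical point `κ 0` to the origin and put `z j = κ (j + 1) - κ 0`. Then `Q` is, up to the
constant `Q (κ 0)`, the primitive of `n X ∏ j, (X - z j)`, so prescribing its critical values means
solving `n - 2` equations of degree `n` in the `n - 2` unknowns `z j`. At a point with distinct
nonzero coordinates the Jacobian is nonsingular: a kernel vector `v` gives the polynomial
`g = ∑ j, v j ∏ k ≠ j, (X - z k)`, and the primitive of `X g` divided by `X ^ 2` has degree less
than `n - 2` and vanishes at all the `z j`, hence is zero. By Bézout there are at most `n ^ (n - 2)`
solutions. The `n`-th roots of unity act freely on them by scaling, and tuples with solutions in the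
same orbit are equivalent, which leaves at most `n ^ (n - 3)` classes.

The Bézout bound for nondegenerate zeros `z a` of `f`, where `f` consists of `m` polynomials of
degree at most `d`, comes from counting dimensions. Choose polynomials `g a` with `g a (z c) = 1` if
`c = a` and `0` otherwise. A relation `∑ c, b c (f) * g c = 0` is trivial: on the line `z a + t v`
we have `f = t J v + ⋯`, so its term of lowest order in `t` is the leading form of `b a` at `J v`,
and `J v` is arbitrary. Hence `N` copies of the space of polynomials of degree at most `T` embed
into the polynomials of degree at most `d T + e`, and letting `T → ∞` gives `N ≤ d ^ m`.
-/

section Growth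

lemma mul_succ_pow_le_of_mul_choose_le {N M m T : ℕ}
    (h : N * (T + m).choose m ≤ (M + m).choose m) : N * (T + 1) ^ m ≤ (M + m) ^ m :=
  calc N * (T + 1) ^ m
    _ ≤ N * (m.factorial * (T + m).choose m) := by
      gcongr
      rw [← Nat.ascFactorial_eq_factorial_mul_choose]
      exact Nat.pow_succ_le_ascFactorial (T + 1) m
    _ = m.factorial * (N * (T + m).choose m) := mul_left_comm _ _ _
    _ ≤ m.factorial * (M + m).choose m := by gcongr
    _ = (M + m).descFactorial m := (Nat.descFactorial_eq_factorial_mul_choose _ _).symm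
    _ ≤ (M + m) ^ m := Nat.descFactorial_le_pow _ _

open Filter Topology in
lemma le_pow_of_forall_mul_pow_le {N m d e : ℕ}
    (h : ∀ T : ℕ, N * (T + 1) ^ m ≤ (d * T + e) ^ m) : N ≤ d ^ m := by
  have hlim : Tendsto (fun T : ℕ => (((e : ℝ) + d * T) / (1 + 1 * T)) ^ m) atTop
      (𝓝 ((d / 1 : ℝ) ^ m)) :=
    (tendsto_add_mul_div_add_mul_atTop_nhds (e : ℝ) 1 d one_ne_zero).pow m
  have hle : (N : ℝ) ≤ (d / 1 : ℝ) ^ m := ge_of_tendsto' hlim fun T => by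
    rw [div_pow, le_div_iff₀ (by positivity), add_comm (e : ℝ), one_mul, add_comm (1 : ℝ)]
    exact_mod_cast h T
  rw [div_one] at hle
  exact_mod_cast hle

end Growth

section LineRestriction

open MvPolynomial
open scoped Polynomial

variable {K σ : Type*} [CommRing K]

/-- Restriction of polynomials in several variables to the line `t ↦ z + t v`. -/
noncomputable def restrictLine (z v : σ → K) : MvPolynomial σ K →ₐ[K] K[X] :=
  aeval fun j => Polynomial.C (z j) + Polynomial.C (v j) * Polynomial.X

lemma restrictLine_X (z v : σ → K) (i : σ) :
    restrictLine z v (X i) = Polynomial.C (z i) + Polynomial.C (v i) * Polynomial.X :=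
  aeval_X _ i

lemma eval_zero_restrictLine (z v : σ → K) (p : MvPolynomial σ K) :
    (restrictLine z v p).eval 0 = eval z p := by
  rw [← Polynomial.coe_aeval_eq_eval, restrictLine, comp_aeval_apply,
    ← MvPolynomial.coe_aeval_eq_eval]
  simp

variable [Fintype σ]

/-- The Jacobian matrix of the system `f` of polynomials at the point `z`. -/
noncomputable def jacobian (f : σ → MvPolynomial σ K) (z : σ → K) : Matrix σ σ K :=
  Matrix.of fun i j => eval z (pderiv j (f i))

lemma coeff_one_restrictLine (z v : σ → K) (p : MvPolynomial σ K) :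
    (restrictLine z v p).coeff 1 = ∑ j, eval z (pderiv j p) * v j := by
  classical
  induction p using MvPolynomial.induction_on with
  | C a => simp [restrictLine]
  | add p q hp hq => simp [hp, hq, add_mul, Finset.sum_add_distrib]
  | mul_X p i hp =>
    have hcoeff : (restrictLine z v p).coeff 0 = eval z p := by
      rw [Polynomial.coeff_zero_eq_eval_zero, eval_zero_restrictLine]
    simp [restrictLine_X, mul_add, ← mul_assoc, hp, hcoeff, pderiv_X, Pi.single_apply, add_mul,
      Finset.sum_add_distrib, Finset.sum_mul, apply_ite (eval z), add_comm, mul_right_comm,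
      mul_comm (z i)]

lemma exists_restrictLine_eq_X_mul {f : σ → MvPolynomial σ K} {z : σ → K}
    (hf : ∀ i, eval z (f i) = 0) (v : σ → K) :
    ∃ h : σ → K[X], (∀ i, restrictLine z v (f i) = Polynomial.X * h i) ∧
      (fun i => (h i).eval 0) = (jacobian f z).mulVec v := by
  have hdvd (i) : Polynomial.X ∣ restrictLine z v (f i) := by
    rw [Polynomial.X_dvd_iff, Polynomial.coeff_zero_eq_eval_zero, eval_zero_restrictLine, hf]
  choose h hh using hdvd
  refine ⟨h, hh, funext fun i => ?_⟩
  rw [← Polynomial.coeff_zero_eq_eval_zero, ← Polynomial.coeff_X_mul, ← hh,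
    coeff_one_restrictLine]
  rfl

end LineRestriction

section Homogeneous

open MvPolynomial
open scoped Polynomial

variable {K σ A : Type*} [CommRing K] [CommRing A] [Algebra K A]

lemma aeval_mul_of_isHomogeneous {φ : MvPolynomial σ K} {d : ℕ} (hφ : φ.IsHomogeneous d)
    (a : A) (x : σ → A) : aeval (fun i => a * x i) φ = a ^ d * aeval x φ := by
  rw [aeval_def, aeval_def, eval₂_eq, eval₂_eq, Finset.mul_sum]
  refine Finset.sum_congr rfl fun s hs => ?_
  rw [Finset.prod_congr rfl fun i _ => mul_pow a (x i) (s i), Finset.prod_mul_distrib,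
    Finset.prod_pow_eq_pow_sum, hφ.degree_eq_sum_deg_support hs]
  ring

lemma X_pow_dvd_aeval_X_mul (h : σ → K[X]) {b : MvPolynomial σ K} {k : ℕ}
    (hb : ∀ d < k, homogeneousComponent d b = 0) :
    Polynomial.X ^ k ∣ aeval (fun i => Polynomial.X * h i) b := by
  rw [← sum_homogeneousComponent b, map_sum]
  refine Finset.dvd_sum fun d _ => ?_
  rw [aeval_mul_of_isHomogeneous (homogeneousComponent_isHomogeneous d b)]
  rcases lt_or_ge d k with hd | hd
  · simp [hb d hd]
  · exact (pow_dvd_pow _ hd).mul_right _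

lemma exists_aeval_X_mul_eq (h : σ → K[X]) {b : MvPolynomial σ K} {k : ℕ}
    (hb : ∀ d < k, homogeneousComponent d b = 0) :
    ∃ q : K[X], aeval (fun i => Polynomial.X * h i) b = Polynomial.X ^ k * q ∧
      q.eval 0 = eval (fun i => (h i).eval 0) (homogeneousComponent k b) := by
  set φ := homogeneousComponent k b with hφ
  obtain ⟨s, hs⟩ : Polynomial.X ^ (k + 1) ∣ aeval (fun i => Polynomial.X * h i) (b - φ) := by
    refine X_pow_dvd_aeval_X_mul h fun d hd => ?_
    rw [map_sub, hφ, homogeneousComponent_of_mem (homogeneousComponent_mem k b)]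
    split_ifs with hdk
    · rw [hdk, sub_self]
    · rw [hb d (by omega), sub_zero]
  refine ⟨aeval h φ + Polynomial.X * s, ?_, ?_⟩
  · rw [map_sub, aeval_mul_of_isHomogeneous (homogeneousComponent_isHomogeneous k b)] at hs
    linear_combination hs
  · rw [← Polynomial.coe_aeval_eq_eval, map_add, comp_aeval_apply,
      ← MvPolynomial.coe_aeval_eq_eval]
    simp

end Homogeneous

section TotalDegree

open MvPolynomial

variable {K σ τ : Type*} [CommRing K]

lemma finrank_restrictTotalDegree [Nontrivial K] [Fintype σ] (N : ℕ) :
    Module.finrank K (restrictTotalDegree σ K N) =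
      (N + Fintype.card σ).choose (Fintype.card σ) := by
  classical
  have hexp : {s : σ →₀ ℕ | (s.sum fun _ e => e) ≤ N} =
      (Finset.range (N + 1)).biUnion fun k =>
        Finset.finsuppAntidiag (Finset.univ : Finset σ) k := by
    ext s
    simp [Finsupp.sum_fintype]
  rw [restrictTotalDegree, Module.finrank_eq_nat_card_basis (basisRestrictSupport K _), hexp,
    Nat.card_coe_set_eq, Set.ncard_coe_finset, Finset.card_biUnion]
  · simp only [Finset.card_finsuppAntidiag_nat_eq_multichoose, Finset.card_univ]
    exact Nat.sum_range_multichoose N _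
  · intro k _ k' _ hk
    refine Finset.disjoint_left.2 fun s hs hs' => hk ?_
    rw [Finset.mem_finsuppAntidiag] at hs hs'
    exact hs.1.symm.trans hs'.1

lemma totalDegree_aeval_le {f : σ → MvPolynomial τ K} {d : ℕ} (hf : ∀ i, (f i).totalDegree ≤ d)
    (b : MvPolynomial σ K) : (aeval f b).totalDegree ≤ d * b.totalDegree := by
  rw [aeval_def, eval₂_eq, algebraMap_eq]
  refine totalDegree_finsetSum_le fun s hs => ?_
  calc (C (b.coeff s) * ∏ i ∈ s.support, f i ^ s i).totalDegree
    _ ≤ (∏ i ∈ s.support, f i ^ s i).totalDegree := by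
      simpa only [totalDegree_C, zero_add] using totalDegree_mul (C (b.coeff s)) _
    _ ≤ ∑ i ∈ s.support, s i * d :=
      (totalDegree_finsetProd _ _).trans <| Finset.sum_le_sum fun i _ =>
        (totalDegree_pow _ _).trans (Nat.mul_le_mul_left _ (hf i))
    _ = d * s.sum fun _ e => e := by rw [← Finset.sum_mul, mul_comm, Finsupp.sum]
    _ ≤ d * b.totalDegree := Nat.mul_le_mul_left _ (le_totalDegree hs)

end TotalDegree

section Bezout

open MvPolynomial
open scoped Polynomial

variable {K σ ι : Type*} [Field K]

lemma exists_eval_eq_ite [Finite ι] [DecidableEq ι] {z : ι → σ → K} (hz : Function.Injective z)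
    (a : ι) : ∃ g : MvPolynomial σ K, ∀ c, eval (z c) g = if c = a then 1 else 0 := by
  have hsep (c : ι) : ∃ p : MvPolynomial σ K, eval (z a) p = 1 ∧ (c ≠ a → eval (z c) p = 0) := by
    by_cases hc : c = a
    · exact ⟨1, map_one _, fun h => (h hc).elim⟩
    · obtain ⟨i, hi⟩ := Function.ne_iff.1 (hz.ne hc)
      exact ⟨C (z a i - z c i)⁻¹ * (X i - C (z c i)), by simp [sub_ne_zero.2 (Ne.symm hi)], by simp⟩
  choose p hpa hpc using hsep
  have := Fintype.ofFinite ι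
  refine ⟨∏ c, p c, fun c => ?_⟩
  rw [map_prod]
  split_ifs with h
  · exact h ▸ Finset.prod_eq_one fun u _ => h ▸ hpa u
  · exact Finset.prod_eq_zero (Finset.mem_univ c) (hpc c h)

variable [Fintype σ]

lemma eval_homogeneousComponent_mulVec_eq_zero [Fintype ι] [DecidableEq ι]
    {f : σ → MvPolynomial σ K} {z : ι → σ → K} {b g : ι → MvPolynomial σ K}
    (hg : ∀ a c, eval (z c) (g a) = if c = a then 1 else 0)
    (hsum : ∑ c, aeval f (b c) * g c = 0) {k : ℕ}
    (hb : ∀ c, ∀ d < k, homogeneousComponent d (b c) = 0)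
    {a : ι} (hf : ∀ i, eval (z a) (f i) = 0) (v : σ → K) :
    eval ((jacobian f (z a)).mulVec v) (homogeneousComponent k (b a)) = 0 := by
  obtain ⟨h, hfh, hJ⟩ := exists_restrictLine_eq_X_mul hf v
  choose q hq hq0 using fun c => exists_aeval_X_mul_eq h (hb c)
  have hline : ∑ c, q c * restrictLine (z a) v (g c) = 0 := by
    have := congrArg (restrictLine (z a) v) hsum
    simp only [map_sum, map_mul, comp_aeval_apply, hfh, hq, mul_assoc, map_zero,
      ← Finset.mul_sum] at this
    exact (mul_eq_zero_iff_left (pow_ne_zero k Polynomial.X_ne_zero)).1 this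
  have := congrArg (Polynomial.eval 0) hline
  simpa [Polynomial.eval_finsetSum, eval_zero_restrictLine, hg, hq0, hJ] using this

lemma eq_zero_of_sum_aeval_mul_eq_zero [Infinite K] [Fintype ι] [DecidableEq ι] [DecidableEq σ]
    {f : σ → MvPolynomial σ K} {z : ι → σ → K} (hf : ∀ a i, eval (z a) (f i) = 0)
    (hJ : ∀ a, (jacobian f (z a)).det ≠ 0) {b g : ι → MvPolynomial σ K}
    (hg : ∀ a c, eval (z c) (g a) = if c = a then 1 else 0)
    (hsum : ∑ c, aeval f (b c) * g c = 0) : b = 0 := by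
  suffices hcomp : ∀ k a, homogeneousComponent k (b a) = 0 by
    funext a
    rw [← sum_homogeneousComponent (b a)]
    exact Finset.sum_eq_zero fun k _ => hcomp k a
  intro k
  induction k using Nat.strong_induction_on with
  | _ k ih =>
    intro a
    have hsurj : Function.Surjective (jacobian f (z a)).mulVec :=
      Matrix.mulVec_surjective_iff_isUnit.2 ((Matrix.isUnit_iff_isUnit_det _).2 (hJ a).isUnit)
    refine MvPolynomial.funext fun y => ?_
    obtain ⟨v, rfl⟩ := hsurj y
    rw [map_zero]
    exact eval_homogeneousComponent_mulVec_eq_zero hg hsum (fun c d hd => ih d hd c) (hf a) v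

lemma exists_card_mul_choose_le [Infinite K] [Fintype ι] [DecidableEq σ]
    {f : σ → MvPolynomial σ K} {d : ℕ} (hd : ∀ i, (f i).totalDegree ≤ d) {z : ι → σ → K}
    (hz : Function.Injective z) (hf : ∀ a i, eval (z a) (f i) = 0)
    (hJ : ∀ a, (jacobian f (z a)).det ≠ 0) :
    ∃ e, ∀ T, Fintype.card ι * (T + Fintype.card σ).choose (Fintype.card σ) ≤
      (d * T + e + Fintype.card σ).choose (Fintype.card σ) := by
  classical
  choose g hg using exists_eval_eq_ite hz
  set e := Finset.univ.sup fun a => (g a).totalDegree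
  refine ⟨e, fun T => ?_⟩
  let L : (ι → restrictTotalDegree σ K T) →ₗ[K] MvPolynomial σ K :=
    ∑ a, LinearMap.mulRight K (g a) ∘ₗ (aeval f).toLinearMap ∘ₗ
      (restrictTotalDegree σ K T).subtype ∘ₗ LinearMap.proj a
  have hL (b) : L b = ∑ a, aeval f (b a : MvPolynomial σ K) * g a := by
    rw [LinearMap.sum_apply]; rfl
  have hmem (b) : L b ∈ restrictTotalDegree σ K (d * T + e) := by
    rw [hL, mem_restrictTotalDegree]
    refine totalDegree_finsetSum_le fun a _ => (totalDegree_mul _ _).trans (Nat.add_le_add ?_ ?_)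
    · exact (totalDegree_aeval_le hd _).trans
        (Nat.mul_le_mul_left _ ((mem_restrictTotalDegree _ _ _).1 (b a).2))
    · exact Finset.le_sup (f := fun a => (g a).totalDegree) (Finset.mem_univ a)
  have hinj : Function.Injective (L.codRestrict _ hmem) := by
    refine (injective_iff_map_eq_zero _).2 fun b hb => funext fun a => Subtype.ext ?_
    have hsum := (hL b).symm.trans (congrArg Subtype.val hb)
    exact congrFun (eq_zero_of_sum_aeval_mul_eq_zero hf hJ hg hsum) a
  have := LinearMap.finrank_le_finrank_of_injective hinj
  rw [Module.finrank_pi_fintype, finrank_restrictTotalDegree] at this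
  simpa [finrank_restrictTotalDegree] using this

theorem encard_nondegenerate_zeros_le [Infinite K] [DecidableEq σ] {f : σ → MvPolynomial σ K}
    {d : ℕ} (hd : ∀ i, (f i).totalDegree ≤ d) :
    {z | (∀ i, eval z (f i) = 0) ∧ (jacobian f z).det ≠ 0}.encard ≤
      (d ^ Fintype.card σ : ℕ) := by
  by_contra! hlt
  obtain ⟨Y, hYZ, hY⟩ := Set.exists_subset_encard_eq (Order.add_one_le_of_lt hlt)
  have hYcard : Y.encard = (d ^ Fintype.card σ + 1 : ℕ) := by simpa using hY
  have : Fintype Y := (Set.finite_of_encard_eq_coe hYcard).fintype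
  obtain ⟨e, he⟩ := exists_card_mul_choose_le hd Subtype.val_injective
    (fun z : Y => (hYZ z.2).1) fun z => (hYZ z.2).2
  have hle : Fintype.card Y ≤ d ^ Fintype.card σ :=
    le_pow_of_forall_mul_pow_le (e := e + Fintype.card σ) fun T => by
      rw [← add_assoc]
      exact mul_succ_pow_le_of_mul_choose_le (he T)
  rw [Set.encard_eq_coe_toFinset_card, Set.toFinset_card, Nat.cast_inj] at hYcard
  omega

end Bezout

section Primitive

open Polynomial

variable {A B : Type*} [CommRing A] [Algebra ℚ A] [CommRing B] [Algebra ℚ B]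

/-- For `p = ∑ aₖ Xᵏ` this is `∑ aₖ / (k + 2) Xᵏ`, so that `X ^ 2 * primitiveCofactor p` is the
primitive of `X * p` that vanishes at `0`. -/
noncomputable def primitiveCofactor : A[X] →ₗ[A] A[X] :=
  Polynomial.lsum fun k => ((k : ℚ) + 2)⁻¹ • monomial k

lemma coeff_primitiveCofactor (p : A[X]) (k : ℕ) :
    (primitiveCofactor p).coeff k = ((k : ℚ) + 2)⁻¹ • p.coeff k := by
  simp only [primitiveCofactor, lsum_apply, Polynomial.sum_def, finsetSum_coeff,
    LinearMap.smul_apply, coeff_smul, coeff_monomial]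
  by_cases hk : p.coeff k = 0 <;> simp [hk]

lemma map_primitiveCofactor (f : A →+* B) (p : A[X]) :
    (primitiveCofactor p).map f = primitiveCofactor (p.map f) := by
  ext k
  simp only [coeff_map, coeff_primitiveCofactor, map_rat_smul]

lemma degree_primitiveCofactor_le (p : A[X]) : (primitiveCofactor p).degree ≤ p.degree :=
  degree_mono fun k hk => by
    rw [mem_support_iff, coeff_primitiveCofactor] at hk
    exact mem_support_iff.2 fun h => hk (by rw [h, smul_zero])

lemma primitiveCofactor_injective : Function.Injective (primitiveCofactor (A := A)) := by
  intro p q h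
  ext k
  have := congrArg (fun r => ((k : ℚ) + 2) • coeff r k) h
  have hk : (k : ℚ) + 2 ≠ 0 := by positivity
  simpa only [coeff_primitiveCofactor, smul_inv_smul₀ hk] using this

lemma derivative_X_sq_mul_primitiveCofactor (p : A[X]) :
    derivative (X ^ 2 * primitiveCofactor p) = X * p := by
  ext k
  rw [coeff_derivative, coeff_X_pow_mul']
  rcases k with _ | k
  · simp
  · have hk : (k : ℚ) + 2 ≠ 0 := by positivity
    have hcast : ((k + 1 : ℕ) : A) + 1 = algebraMap ℚ A (k + 2) := by
      rw [map_add, map_natCast, map_ofNat, Nat.cast_succ, add_assoc, one_add_one_eq_two]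
    rw [if_pos (by omega), show k + 1 + 1 - 2 = k by omega, coeff_primitiveCofactor, coeff_X_mul,
      hcast, mul_comm, ← Algebra.smul_def, smul_inv_smul₀ hk]

lemma eq_X_sq_mul_primitiveCofactor_add_C {p q : A[X]} (h : derivative p = X * q) :
    p = X ^ 2 * primitiveCofactor q + C (p.coeff 0) := by
  ext k
  rw [coeff_add, coeff_C, coeff_X_pow_mul']
  rcases k with _ | k
  · simp
  have hk : (k : ℚ) + 1 ≠ 0 := by positivity
  have hder : ((k : ℚ) + 1) • p.coeff (k + 1) = (X * q).coeff k := by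
    rw [← h, coeff_derivative, Algebra.smul_def, map_add, map_natCast, map_one, mul_comm]
  rw [← inv_smul_smul₀ hk (p.coeff (k + 1)), hder]
  rcases k with _ | k
  · simp
  · simp [coeff_primitiveCofactor, add_assoc, one_add_one_eq_two]

end Primitive

section Derivation

open Polynomial

variable {R A : Type*} [CommRing R] [CommRing A] [Algebra R A] (D : Derivation R A A)

lemma derivation_eval {p q : A[X]} (h : ∀ k, D (p.coeff k) = q.coeff k) (a : A) :
    D (p.eval a) = q.eval a + p.derivative.eval a * D a := by
  have hq : q = p.sum fun k c => monomial k (D c) := by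
    ext k
    rw [← h]
    by_cases hk : p.coeff k = 0 <;> simp [Polynomial.sum_def, coeff_monomial, hk]
  rw [hq, derivative_eval, eval_eq_sum, Polynomial.sum_def, Polynomial.sum_def, Polynomial.sum_def,
    map_sum, eval_finsetSum, Finset.sum_mul, ← Finset.sum_add_distrib]
  refine Finset.sum_congr rfl fun k _ => ?_
  simp [Derivation.leibniz, Derivation.leibniz_pow, mul_assoc, mul_comm, mul_left_comm]

lemma derivation_coeff_X_sub_C_mul {p : A[X]} (hp : ∀ k, D (p.coeff k) = 0) (a : A) (k : ℕ) :
    D (((X - C a) * p).coeff k) = -(D a * p.coeff k) := by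
  rcases k with _ | k
  · simp [mul_coeff_zero, hp, mul_comm (p.coeff 0)]
  · simp only [coeff_X_sub_C_mul, map_sub, Derivation.leibniz, hp, smul_eq_mul, mul_zero,
      zero_add, zero_sub, mul_comm (D a)]

end Derivation

lemma exists_perm_of_map_univ_eq {ι α : Type*} [Fintype ι] {f g : ι → α}
    (h : Finset.univ.val.map f = Finset.univ.val.map g) :
    ∃ π : Equiv.Perm ι, ∀ i, f i = g (π i) := by
  classical
  have hcard (c : α) : Fintype.card {i // f i = c} = Fintype.card {i // g i = c} := by
    simpa only [Multiset.count_map, Fintype.card_subtype, Finset.card_def, Finset.filter_val,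
      eq_comm] using congrArg (Multiset.count c) h
  exact ⟨Equiv.ofFiberEquiv fun c => Fintype.equivOfCardEq (hcard c),
    fun i => (Equiv.ofFiberEquiv_map _ i).symm⟩

section Nodal

open Polynomial Lagrange

section CommRing

variable {R ι : Type*} [CommRing R]

lemma map_nodal {S : Type*} [CommRing S] (f : R →+* S) (s : Finset ι) (v : ι → R) :
    (nodal s v).map f = nodal s fun i => f (v i) := by
  simp [nodal_eq, Polynomial.map_prod]

lemma nodal_univ_comp_perm [Fintype ι] (v : ι → R) (π : Equiv.Perm ι) :
    nodal Finset.univ (v ∘ π) = nodal Finset.univ v :=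
  Equiv.prod_comp π fun i => X - C (v i)

lemma nodal_comp_X_add_C (s : Finset ι) (v : ι → R) (a : R) :
    (nodal s v).comp (X + C a) = nodal s fun i => v i - a := by
  simp only [nodal_eq, prod_comp, sub_comp, X_comp, C_comp, C_sub]
  exact Finset.prod_congr rfl fun i _ => by ring

variable [IsDomain R]

lemma exists_perm_of_nodal_univ_eq [Fintype ι] {f g : ι → R}
    (h : nodal Finset.univ f = nodal Finset.univ g) :
    ∃ π : Equiv.Perm ι, ∀ i, f i = g (π i) := by
  have hroots (f : ι → R) : (nodal Finset.univ f).roots = Finset.univ.val.map f := by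
    rw [← roots_multiset_prod_X_sub_C (Finset.univ.val.map f), Multiset.map_map]
    rfl
  exact exists_perm_of_map_univ_eq (by rw [← hroots f, ← hroots g, h])

lemma eq_zero_of_sum_smul_nodal_erase_eq_zero [Fintype ι] [DecidableEq ι] {z v : ι → R}
    (hz : Function.Injective z) (h : ∑ j, v j • nodal (Finset.univ.erase j) z = 0) : v = 0 := by
  funext i
  have := congrArg (eval (z i)) h
  rw [eval_finsetSum, Finset.sum_eq_single i] at this
  · rw [eval_smul, smul_eq_mul, eval_zero] at this
    refine (mul_eq_zero.1 this).resolve_right (eval_nodal_not_at_node fun j hj => ?_)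
    exact hz.ne (Finset.ne_of_mem_erase hj).symm
  · intro j _ hji
    rw [eval_smul, eval_nodal_at_node (Finset.mem_erase.2 ⟨hji.symm, Finset.mem_univ i⟩),
      smul_zero]
  · exact fun hi => (hi (Finset.mem_univ i)).elim

end CommRing

lemma nodal_smul {K ι : Type*} [Field K] (s : Finset ι) (v : ι → K) {ω : K} (hω : ω ≠ 0) :
    nodal s (ω • v) = C (ω ^ s.card) * (nodal s v).comp (C ω⁻¹ * X) := by
  have hfactor (i : ι) : X - C (ω * v i) = C ω * (C ω⁻¹ * X - C (v i)) := by
    rw [mul_sub, ← mul_assoc, ← C_mul, ← C_mul, mul_inv_cancel₀ hω, C_1, one_mul]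
  simp only [nodal_eq, Pi.smul_apply, smul_eq_mul, hfactor, Finset.prod_mul_distrib,
    Finset.prod_const, C_pow, prod_comp, sub_comp, X_comp, C_comp]

end Nodal

section CriticalValuePoly

open MvPolynomial Lagrange

variable {σ : Type*}

section CommRing

variable {R : Type*} [CommRing R]

lemma isHomogeneous_coeff_nodal_X [Fintype σ] {k d : ℕ} (h : k + d = Fintype.card σ) :
    ((nodal Finset.univ (X : σ → MvPolynomial σ R)).coeff k).IsHomogeneous d := by
  refine IsHomogeneous.coeff_isHomogeneous_of_optionEquivLeft_symm ?_ k d h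
  simp only [nodal_eq, map_prod, map_sub, optionEquivLeft_symm_X, optionEquivLeft_symm_C_X]
  simpa using IsHomogeneous.prod Finset.univ
    (fun i : σ => (X none - X (some i) : MvPolynomial (Option σ) R)) (fun _ => 1)
    fun i _ => (isHomogeneous_X R _).sub (isHomogeneous_X R _)

lemma pderiv_coeff_nodal_X_of_notMem {s : Finset σ} {j : σ} (hj : j ∉ s) (k : ℕ) :
    pderiv j ((nodal s (X : σ → MvPolynomial σ R)).coeff k) = 0 := by
  classical
  induction s using Finset.induction_on generalizing k with
  | empty => rw [nodal_empty, Polynomial.coeff_one]; split_ifs <;> simp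
  | insert i s hi ih =>
    rw [Finset.mem_insert, not_or] at hj
    rw [nodal_insert_eq_nodal hi, derivation_coeff_X_sub_C_mul _ (ih hj.2),
      pderiv_X_of_ne (Ne.symm hj.1), zero_mul, neg_zero]

lemma pderiv_coeff_nodal_X [Fintype σ] [DecidableEq σ] (j : σ) (k : ℕ) :
    pderiv j ((nodal Finset.univ (X : σ → MvPolynomial σ R)).coeff k) =
      -(nodal (Finset.univ.erase j) X).coeff k := by
  rw [nodal_eq_mul_nodal_erase (Finset.mem_univ j), derivation_coeff_X_sub_C_mul _
    (pderiv_coeff_nodal_X_of_notMem (Finset.notMem_erase j _)), pderiv_X_self, one_mul]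

end CommRing

section RatAlgebra

variable {K : Type*} [CommRing K] [Algebra ℚ K]

lemma eval_eval_primitiveCofactor_nodal (z : σ → K) (s : Finset σ) (i : σ) :
    eval z ((primitiveCofactor (nodal s X)).eval (X i)) =
      (primitiveCofactor (nodal s z)).eval (z i) := by
  rw [← Polynomial.eval_map_apply, map_primitiveCofactor, map_nodal]
  simp

variable [Fintype σ]

/-- If `0` and the `z j` are the critical points of `P` and `P' = X * ∏ j, (X - z j)`, this
polynomial in the `z j` is the difference `P (z i) - P 0` of critical values. -/
noncomputable def criticalValuePoly (i : σ) : MvPolynomial σ K :=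
  X i ^ 2 * (primitiveCofactor (nodal Finset.univ X)).eval (X i)

lemma eval_criticalValuePoly (z : σ → K) (i : σ) :
    eval z (criticalValuePoly i) =
      z i ^ 2 * (primitiveCofactor (nodal Finset.univ z)).eval (z i) := by
  rw [criticalValuePoly, map_mul, map_pow, eval_X, eval_eval_primitiveCofactor_nodal]

lemma totalDegree_criticalValuePoly_le [Nontrivial K] (i : σ) :
    (criticalValuePoly i : MvPolynomial σ K).totalDegree ≤ Fintype.card σ + 2 := by
  have hdeg : (primitiveCofactor (nodal Finset.univ (X : σ → MvPolynomial σ K))).natDegree <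
      Fintype.card σ + 1 := by
    refine Nat.lt_succ_of_le ((Polynomial.natDegree_le_natDegree
      (degree_primitiveCofactor_le _)).trans_eq natDegree_nodal)
  refine IsHomogeneous.totalDegree_le ?_
  rw [criticalValuePoly, Polynomial.eval_eq_sum_range' hdeg, add_comm _ 2]
  refine (isHomogeneous_X_pow (R := K) i 2).mul (IsHomogeneous.sum _ _ _ fun k hk => ?_)
  have hk' : k ≤ Fintype.card σ := Nat.lt_succ_iff.1 (Finset.mem_range.1 hk)
  have hcoeff : ((nodal Finset.univ (X : σ → MvPolynomial σ K)).coeff k).IsHomogeneous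
      (Fintype.card σ - k) := isHomogeneous_coeff_nodal_X (Nat.add_sub_cancel' hk')
  rw [coeff_primitiveCofactor]
  have hsmul : (((k : ℚ) + 2)⁻¹ •
      (nodal Finset.univ (X : σ → MvPolynomial σ K)).coeff k).IsHomogeneous
        (Fintype.card σ - k) :=
    Submodule.smul_of_tower_mem (homogeneousSubmodule σ K _) _ hcoeff
  simpa only [Nat.sub_add_cancel hk'] using hsmul.mul (isHomogeneous_X_pow i k)

lemma eval_pderiv_criticalValuePoly [DecidableEq σ] (z : σ → K) (i j : σ) :
    eval z (pderiv j (criticalValuePoly i)) =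
      -(z i ^ 2 * (primitiveCofactor (nodal (Finset.univ.erase j) z)).eval (z i)) := by
  have hcoeff (k : ℕ) :
      pderiv j ((Polynomial.X ^ 2 * primitiveCofactor (nodal Finset.univ X)).coeff k) =
        (-(Polynomial.X ^ 2 * primitiveCofactor (nodal (Finset.univ.erase j)
          (X : σ → MvPolynomial σ K)))).coeff k := by
    simp only [Polynomial.coeff_neg, Polynomial.coeff_X_pow_mul', coeff_primitiveCofactor]
    split_ifs
    · rw [map_rat_smul, pderiv_coeff_nodal_X, smul_neg]
    · rw [map_zero, neg_zero]
  have hpoly : criticalValuePoly i =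
      (Polynomial.X ^ 2 * primitiveCofactor (nodal Finset.univ X)).eval
        (X i : MvPolynomial σ K) := by
    simp [criticalValuePoly]
  rw [hpoly, derivation_eval _ hcoeff, derivative_X_sq_mul_primitiveCofactor]
  simp [eval_nodal_at_node (Finset.mem_univ i), eval_eval_primitiveCofactor_nodal]

lemma criticalValuePoly_jacobian_mulVec [DecidableEq σ] (c : σ → K) (z v : σ → K) (i : σ) :
    ((jacobian (fun i => criticalValuePoly i - C (c i)) z).mulVec v) i =
      -(z i ^ 2 * (primitiveCofactor (∑ j, v j • nodal (Finset.univ.erase j) z)).eval (z i)) := by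
  simp only [Matrix.mulVec, dotProduct, jacobian, Matrix.of_apply, map_sub, pderiv_C, sub_zero,
    eval_pderiv_criticalValuePoly, map_sum, map_smul, Polynomial.eval_finsetSum,
    Polynomial.eval_smul, Finset.mul_sum, ← Finset.sum_neg_distrib, smul_eq_mul]
  exact Finset.sum_congr rfl fun j _ => by ring

end RatAlgebra

lemma det_jacobian_criticalValuePoly_ne_zero {K : Type*} [Field K] [CharZero K] [Fintype σ]
    [DecidableEq σ] (c : σ → K) {z : σ → K}
    (hz : Function.Injective z) (hz0 : ∀ i, z i ≠ 0) :
    (jacobian (fun i => criticalValuePoly i - C (c i)) z).det ≠ 0 := by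
  intro hdet
  obtain ⟨v, hv, hJv⟩ := Matrix.exists_mulVec_eq_zero_iff.2 hdet
  set g := ∑ j, v j • nodal (Finset.univ.erase j) z
  have heval (i : σ) : (primitiveCofactor g).eval (z i) = 0 := by
    have := (criticalValuePoly_jacobian_mulVec c z v i).symm.trans (congrFun hJv i)
    exact (mul_eq_zero.1 (neg_eq_zero.1 this)).resolve_left (pow_ne_zero 2 (hz0 i))
  have hdeg : (primitiveCofactor g).degree < (Finset.univ : Finset σ).card := by
    refine (degree_primitiveCofactor_le g).trans_lt (Polynomial.mem_degreeLT.1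
      (Submodule.sum_mem _ fun j hj => Submodule.smul_mem _ _ (Polynomial.mem_degreeLT.2 ?_)))
    rw [degree_nodal]
    exact_mod_cast Finset.card_erase_lt_of_mem hj
  have hcof : primitiveCofactor g = 0 :=
    Polynomial.eq_zero_of_degree_lt_of_eval_index_eq_zero _ hz.injOn hdeg fun i _ => heval i
  have hg : g = 0 := primitiveCofactor_injective (hcof.trans (map_zero _).symm)
  exact hv (eq_zero_of_sum_smul_nodal_erase_eq_zero hz hg)

end CriticalValuePoly

section CriticalData

open Polynomial Lagrange

variable {K : Type*} [Field K] {m : ℕ}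

/-- The centered polynomial `nodal univ l` with roots `l` has the distinct critical points `κ j`,
with critical values `r j`. -/
structure IsCriticalData (l : Fin (m + 2) → K) (κ r : Fin (m + 1) → K) : Prop where
  sum_eq_zero : ∑ i, l i = 0
  injective : Function.Injective κ
  derivative_eq : derivative (nodal Finset.univ l) = C ((m + 2 : ℕ) : K) * nodal Finset.univ κ
  eval_eq : ∀ j, (nodal Finset.univ l).eval (κ j) = r j

/-- The critical points `κ 1, …, κ m` in the coordinate centered at `κ 0`. -/
def criticalDifferences (κ : Fin (m + 1) → K) (j : Fin m) : K := κ j.succ - κ 0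

lemma criticalDifferences_smul (ω : K) (κ : Fin (m + 1) → K) :
    criticalDifferences (ω • κ) = ω • criticalDifferences κ := by
  ext j
  simp [criticalDifferences, mul_sub]

namespace IsCriticalData

variable {l l' : Fin (m + 2) → K} {κ κ' r r' : Fin (m + 1) → K}

lemma criticalDifferences_injective (h : IsCriticalData l κ r) :
    Function.Injective (criticalDifferences κ) := fun _ _ hij =>
  Fin.succ_injective _ (h.injective (sub_left_injective hij))

lemma criticalDifferences_ne_zero (h : IsCriticalData l κ r) (j : Fin m) :
    criticalDifferences κ j ≠ 0 :=
  sub_ne_zero.2 (h.injective.ne (Fin.succ_ne_zero j))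

lemma smul (h : IsCriticalData l κ r) {ω : K} (hω : ω ^ (m + 2) = 1) :
    IsCriticalData (ω • l) (ω • κ) r := by
  have hω0 : ω ≠ 0 := by rintro rfl; simp at hω
  have hl : nodal Finset.univ (ω • l) = (nodal Finset.univ l).comp (C ω⁻¹ * X) := by
    rw [nodal_smul _ _ hω0, Finset.card_fin, hω, C_1, one_mul]
  have hinv : ω⁻¹ = ω ^ (m + 1) := inv_eq_of_mul_eq_one_right (by rw [← pow_succ', hω])
  refine ⟨?_, (mul_right_injective₀ hω0).comp h.injective, ?_, fun j => ?_⟩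
  · simp only [Pi.smul_apply, smul_eq_mul, ← Finset.mul_sum, h.sum_eq_zero, mul_zero]
  · rw [hl, derivative_comp, h.derivative_eq, nodal_smul _ _ hω0, Finset.card_fin, ← hinv]
    simp only [derivative_C_mul, derivative_X, mul_one, mul_comp, C_comp]
    ring
  · rw [hl, eval_comp, ← h.eval_eq j]
    simp [hω0]

lemma exists_of_map_eq (h : IsCriticalData l κ r')
    (hr : Finset.univ.val.map r = Finset.univ.val.map r') : ∃ κ', IsCriticalData l κ' r := by
  obtain ⟨π, hπ⟩ := exists_perm_of_map_univ_eq hr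
  exact ⟨κ ∘ π, h.sum_eq_zero, h.injective.comp π.injective,
    by rw [nodal_univ_comp_perm, h.derivative_eq], fun j => (h.eval_eq _).trans (hπ j).symm⟩

variable [CharZero K]

lemma nodal_comp_eq (h : IsCriticalData l κ r) :
    (nodal Finset.univ l).comp (X + C (κ 0)) =
      X ^ 2 * primitiveCofactor (((m + 2 : ℕ) : K) • nodal Finset.univ (criticalDifferences κ)) +
        C (r 0) := by
  have hκ : (nodal Finset.univ κ).comp (X + C (κ 0)) =
      X * nodal Finset.univ (criticalDifferences κ) := by
    rw [nodal_comp_X_add_C, nodal_eq, Fin.prod_univ_succ, sub_self, C_0, sub_zero]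
    rfl
  have hder : derivative ((nodal Finset.univ l).comp (X + C (κ 0))) =
      X * (((m + 2 : ℕ) : K) • nodal Finset.univ (criticalDifferences κ)) := by
    rw [derivative_comp, h.derivative_eq, mul_comp, hκ, C_comp, smul_eq_C_mul]
    simp only [derivative_add, derivative_X, derivative_C, add_zero, one_mul]
    ring
  rw [← h.eval_eq 0]
  simpa [coeff_zero_eq_eval_zero, eval_comp] using eq_X_sq_mul_primitiveCofactor_add_C hder

lemma eval_criticalValuePoly_criticalDifferences (h : IsCriticalData l κ r) (j : Fin m) :
    MvPolynomial.eval (criticalDifferences κ) (criticalValuePoly j) =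
      (r j.succ - r 0) / (m + 2 : ℕ) := by
  have := congrArg (eval (criticalDifferences κ j)) h.nodal_comp_eq
  rw [eval_comp, eval_add, eval_X, eval_C, criticalDifferences, sub_add_cancel, h.eval_eq] at this
  rw [eval_criticalValuePoly, eq_div_iff (Nat.cast_ne_zero.2 (by omega)), this, map_smul]
  simp [criticalDifferences, mul_comm]

lemma exists_perm_of_criticalDifferences_eq (h : IsCriticalData l κ r)
    (h' : IsCriticalData l' κ' r) (hz : criticalDifferences κ = criticalDifferences κ') :
    ∃ π : Equiv.Perm (Fin (m + 2)), ∀ i, l' i = l (π i) := by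
  have hnodal : nodal Finset.univ (fun i => l' i - κ' 0) =
      nodal Finset.univ fun i => l i - κ 0 := by
    rw [← nodal_comp_X_add_C, ← nodal_comp_X_add_C, h.nodal_comp_eq, h'.nodal_comp_eq, hz]
  obtain ⟨π, hπ⟩ := exists_perm_of_nodal_univ_eq hnodal
  have hbase : κ 0 = κ' 0 := by
    have hsum := Finset.sum_congr rfl fun i (_ : i ∈ Finset.univ) => hπ i
    rw [Equiv.sum_comp π fun i => l i - κ 0, Finset.sum_sub_distrib, Finset.sum_sub_distrib,
      h.sum_eq_zero, h'.sum_eq_zero] at hsum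
    have hm : (m : K) + 2 ≠ 0 := by exact_mod_cast (by omega : m + 2 ≠ 0)
    simpa [hm, eq_comm] using hsum
  exact ⟨π, fun i => by simpa [hbase] using hπ i⟩

end IsCriticalData

end CriticalData

section Counting

lemma card_quotient_mul_card_le_encard {α β G : Type*} [Group G] [MulAction G β] (s : Setoid α)
    {z : α → β} {Z : Set β} (hmem : ∀ (g : G) a, g • z a ∈ Z)
    (hfree : ∀ (g : G) a, g • z a = z a → g = 1)
    (hrel : ∀ (g : G) a b, g • z a = z b → s a b) :
    ENat.card (Quotient s) * ENat.card G ≤ Z.encard := by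
  rw [← ENat.card_prod]
  let φ (p : Quotient s × G) : Z := ⟨p.2 • z p.1.out, hmem _ _⟩
  refine ENat.card_le_card_of_injective (f := φ) fun ⟨q, g⟩ ⟨q', g'⟩ h => ?_
  have hmove : (g'⁻¹ * g) • z q.out = z q'.out := by
    rw [mul_smul, inv_smul_eq_iff]
    exact congrArg Subtype.val h
  obtain rfl : q = q' := by
    rw [← q.out_eq, ← q'.out_eq]
    exact Quotient.sound (hrel _ _ _ hmove)
  rw [inv_mul_eq_one.1 (hfree _ _ hmove)]

lemma exists_eq_iff_of_card_quotient_le {α : Type*} {s : Setoid α} {N : ℕ}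
    (h : ENat.card (Quotient s) ≤ N) : ∃ F : α → Fin N, ∀ a b, F a = F b ↔ s a b := by
  have : Finite (Quotient s) := ENat.card_lt_top.1 (h.trans_lt (ENat.natCast_lt_top N))
  have : Fintype (Quotient s) := Fintype.ofFinite _
  obtain ⟨e⟩ : Nonempty (Quotient s ↪ Fin N) := Function.Embedding.nonempty_of_card_le
    (by simpa [ENat.card_eq_coe_fintype_card] using h)
  exact ⟨fun a => e ⟦a⟧, fun a b => e.injective.eq_iff.trans Quotient.eq⟩

end Counting

section Main

open Lagrange

variable {K : Type*} [Field K]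

/-- Tuples are equivalent when they differ by an `n`-th root of unity and a permutation. -/
def rootOfUnityPermSetoid (K : Type*) [Field K] (n : ℕ) [NeZero n] : Setoid (Fin n → K) where
  r l l' := ∃ ω : K, ω ^ n = 1 ∧ ∃ π : Equiv.Perm (Fin n), ∀ i, l' i = ω * l (π i)
  iseqv.refl l := ⟨1, one_pow n, 1, fun i => (one_mul _).symm⟩
  iseqv.symm := by
    rintro l l' ⟨ω, hω, π, hπ⟩
    have hω0 : ω ≠ 0 := by rintro rfl; simp [NeZero.ne n] at hω
    exact ⟨ω⁻¹, by rw [inv_pow, hω, inv_one], π⁻¹, fun i => by simp [hπ, hω0]⟩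
  iseqv.trans := by
    rintro l l' l'' ⟨ω, hω, π, hπ⟩ ⟨ω', hω', π', hπ'⟩
    exact ⟨ω' * ω, by rw [mul_pow, hω, hω', one_mul], π * π', fun i => by
      simp [hπ, hπ', mul_assoc]⟩

variable [CharZero K] {m : ℕ} {r : Fin (m + 1) → K} {S : Set (Fin (m + 2) → K)}

/-- The differences `κ j - κ 0` realizing the critical values `r`. -/
def criticalDifferencesWithValues (r : Fin (m + 1) → K) : Set (Fin m → K) :=
  {z | ∃ l κ, IsCriticalData l κ r ∧ criticalDifferences κ = z}

lemma encard_criticalDifferencesWithValues_le (r : Fin (m + 1) → K) :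
    (criticalDifferencesWithValues r).encard ≤ ((m + 2) ^ m : ℕ) := by
  let c (j : Fin m) : K := (r j.succ - r 0) / (m + 2 : ℕ)
  let f (j : Fin m) : MvPolynomial (Fin m) K := criticalValuePoly j - MvPolynomial.C (c j)
  have hdeg (j) : (f j).totalDegree ≤ m + 2 :=
    (MvPolynomial.totalDegree_sub_C_le _ _).trans
      ((totalDegree_criticalValuePoly_le j).trans_eq (by rw [Fintype.card_fin]))
  have hle := encard_nondegenerate_zeros_le hdeg
  rw [Fintype.card_fin] at hle
  refine (Set.encard_le_encard ?_).trans hle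
  rintro _ ⟨l, κ, h, rfl⟩
  refine ⟨fun j => ?_, det_jacobian_criticalValuePoly_ne_zero c h.criticalDifferences_injective
    h.criticalDifferences_ne_zero⟩
  rw [map_sub, MvPolynomial.eval_C, h.eval_criticalValuePoly_criticalDifferences, sub_self]

lemma finite_of_forall_isCriticalData {κ : (Fin (m + 2) → K) → Fin (m + 1) → K}
    (h : ∀ l ∈ S, IsCriticalData l (κ l) r) : S.Finite := by
  refine Set.Finite.of_finite_fibers (fun l => criticalDifferences (κ l)) ?_ ?_
  · refine (Set.finite_of_encard_le_coe (encard_criticalDifferencesWithValues_le r)).subset ?_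
    rintro _ ⟨l, hl, rfl⟩
    exact ⟨l, κ l, h l hl, rfl⟩
  · rintro _ ⟨l, hl, rfl⟩
    refine (Set.finite_range fun π : Equiv.Perm (Fin (m + 2)) => l ∘ π).subset ?_
    rintro l' ⟨hl', hz⟩
    obtain ⟨π, hπ⟩ := (h l hl).exists_perm_of_criticalDifferences_eq (h l' hl') hz.symm
    exact ⟨π, (funext hπ).symm⟩

lemma card_quotient_mul_le [NeZero m] [HasEnoughRootsOfUnity K (m + 2)]
    {κ : (Fin (m + 2) → K) → Fin (m + 1) → K} (h : ∀ l ∈ S, IsCriticalData l (κ l) r) :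
    ENat.card (Quotient ((rootOfUnityPermSetoid K (m + 2)).comap ((↑) : S → _))) * (m + 2 : ℕ) ≤
      ((m + 2) ^ m : ℕ) := by
  have hpow (g : rootsOfUnity (m + 2) K) : ((g : Kˣ) : K) ^ (m + 2) = 1 :=
    (mem_rootsOfUnity' _ _).1 g.2
  have hscale (g : rootsOfUnity (m + 2) K) (l : S) :
      IsCriticalData (((g : Kˣ) : K) • (l : Fin (m + 2) → K)) (((g : Kˣ) : K) • κ l) r :=
    (h l l.2).smul (hpow g)
  have hcard : ENat.card (rootsOfUnity (m + 2) K) = (m + 2 : ℕ) := by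
    rw [ENat.card_eq_coe_natCard, HasEnoughRootsOfUnity.natCard_rootsOfUnity]
  rw [← hcard]
  refine (card_quotient_mul_card_le_encard _ (z := fun l : S => criticalDifferences (κ l))
    (Z := criticalDifferencesWithValues r) ?_ ?_ ?_).trans
      (encard_criticalDifferencesWithValues_le r)
  · exact fun g l => ⟨_, _, hscale g l, criticalDifferences_smul _ _⟩
  · intro g l hg
    have h0 : ((g : Kˣ) : K) * _ = _ := congrFun hg 0
    have := (mul_eq_right₀ ((h l l.2).criticalDifferences_ne_zero 0)).1 h0
    exact Subtype.ext (Units.ext this)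
  · intro g l l' hg
    obtain ⟨π, hπ⟩ := (hscale g l).exists_perm_of_criticalDifferences_eq (h l' l'.2)
      ((criticalDifferences_smul _ _).trans hg)
    exact ⟨_, hpow g, π, hπ⟩

theorem stmt_12_general {K : Type*} [Field K] [CharZero K] (n : ℕ) (hn : 3 ≤ n)
    [HasEnoughRootsOfUnity K n] (R : Multiset K) (S : Set (Fin n → K))
    (hS : ∀ l ∈ S, ∑ i, l i = 0 ∧ ∃ κ : Fin (n - 1) → K, Function.Injective κ ∧
      Polynomial.derivative (∏ j : Fin n, (Polynomial.X - Polynomial.C (l j))) =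
        Polynomial.C (n : K) * ∏ j : Fin (n - 1), (Polynomial.X - Polynomial.C (κ j)) ∧
      (Finset.univ.val.map fun j : Fin (n - 1) =>
        (∏ i : Fin n, (Polynomial.X - Polynomial.C (l i))).eval (κ j)) = R) :
    S.Finite ∧ ∃ F : S → Fin (n ^ (n - 3)), ∀ x y : S,
      F x = F y ↔ ∃ ω : K, ω ^ n = 1 ∧ ∃ π : Equiv.Perm (Fin n),
        ∀ i, (y : Fin n → K) i = ω * (x : Fin n → K) (π i) := by
  obtain ⟨m, rfl⟩ : ∃ m, n = m + 1 + 2 := ⟨n - 3, by omega⟩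
  obtain rfl | ⟨l₀, hl₀⟩ := S.eq_empty_or_nonempty
  · exact ⟨Set.finite_empty, isEmptyElim, isEmptyElim⟩
  obtain ⟨-, κ₀, -, -, hR⟩ := hS l₀ hl₀
  let r (j : Fin (m + 2)) : K := (nodal Finset.univ l₀).eval (κ₀ j)
  have hdata (l) (hl : l ∈ S) : ∃ κ, IsCriticalData l κ r := by
    obtain ⟨hsum, κ, hκ, hder, hvalues⟩ := hS l hl
    exact (IsCriticalData.mk hsum hκ hder fun _ => rfl).exists_of_map_eq (hR.trans hvalues.symm)
  choose! κ hκ using hdata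
  have hcard := card_quotient_mul_le hκ
  rw [pow_succ, Nat.cast_mul, ENat.mul_le_mul_right_iff (Nat.cast_ne_zero.2 (by omega))
    (ENat.natCast_ne_top _)] at hcard
  exact ⟨finite_of_forall_isCriticalData hκ, exists_eq_iff_of_card_quotient_le hcard⟩

end Main

/-- For a non-degenerate Henry–Parusiński value `R` (a multiset of
`n−1` pairwise distinct nonzero complex numbers), the set `S` of normalized
injective tuples (zero sum, product one) whose associated polynomial `Q_λ` has
`n−1` distinct critical points and multiset of critical values `R` is finite,
and has at most `n^(n−3)` equivalence classes under permutation and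
multiplication by `n`-th roots of unity. -/
theorem stmt_12 (n : ℕ) (hn : 3 ≤ n) (R : Multiset ℂ)
    (hRcard : Multiset.card R = n - 1) (hRnd : R.Nodup) (hR0 : (0 : ℂ) ∉ R)
    (S : Set (Fin n → ℂ))
    (hS : S = {l | Function.Injective l ∧ ∑ i, l i = 0 ∧ ∏ i, l i = 1 ∧
      ∃ κ : Fin (n - 1) → ℂ, Function.Injective κ ∧
        Polynomial.derivative (∏ j : Fin n, (Polynomial.X - Polynomial.C (l j))) =
          Polynomial.C (n : ℂ) *
            ∏ j : Fin (n - 1), (Polynomial.X - Polynomial.C (κ j)) ∧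
        (Finset.univ.val.map (fun j : Fin (n - 1) =>
          (∏ i : Fin n, (Polynomial.X - Polynomial.C (l i))).eval (κ j)) :
            Multiset ℂ) = R}) :
    S.Finite ∧ ∃ F : S → Fin (n ^ (n - 3)), ∀ x y : S,
      F x = F y ↔ ∃ ω : ℂ, ω ^ n = 1 ∧ ∃ π : Equiv.Perm (Fin n),
        ∀ i, (y : Fin n → ℂ) i = ω * (x : Fin n → ℂ) (π i) := by
  have : NeZero n := ⟨by omega⟩
  exact stmt_12_general n hn R S fun l hl => (hS ▸ hl).2.imp_right And.right
end

section
/- Let n ≥ 2 and let λ : [0,1] → ℂⁿ be a continuous family of tuples λ(t) = (λ₁(t),…,λₙ(t)) such that for every t ∈ [0,1] the entries of λ(t) are pairwise distinct and nonzero with λ₁(t)⋯λₙ(t) = 1, and such that the multiset of critical values of Q_{λ(t)}(s) = ∏_{j=1}^{n}(s−λ_j(t)) is independent of t and consists of n−1 pairwise distinct nonzero complex numbers. Then the family is trivial up to the action of permutations and n-th roots of unity: for every t ∈ [0,1] there exist ω ∈ ℂ with ωⁿ = 1 and a permutation π of {1,…,n} such that λ_i(t) = ω·λ_{π(i)}(0)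 for all i. (This is the algebraic form of: a continuous family of quasi-homogeneous, non-homogeneous, isolated-singularity function germs with constant Henry–Parusiński invariant is analytically trivial.) -/
/-!
A monic polynomial of degree `n` is determined near `p` by its two leading coefficients and its
critical values, provided that those of `p` are pairwise distinct. Indeed, differentiate the values
and the slopes of `p + r`, `deg r < n - 1`, at `n - 1` moving points, which start at the critical
points `d` of `p`. The velocities of the points do not affect the values to first order, since
`p'(d i) = 0`, so the derivative determines `r` from the values, and then, since `p''(d i) ≠ 0`, the
velocities from the slopes; by the inverse function theorem the map is locally injective.

Hence, once the family `l` is translated to have mean zero, `∏ i, (X - C (l t i))` does not depend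
on `t`. Its roots then move continuously in a finite set, and so does the mean of `l t`, which is a
root of a fixed polynomial because `∏ i, l t i` is constant. So `l` itself is constant.
-/

open Polynomial Filter Topology Finset

section CriticalValues

variable {k ι : Type*} [CommRing k] [IsDomain k] [Fintype ι]

/-- The values of `p` at the roots of `p'`, counted with the multiplicity of the root. For `p'` of
degree `m` that splits, these are `m` values; for constant `p` the multiset is empty. -/
noncomputable def criticalValues (p : k[X]) : Multiset k :=
  (derivative p).roots.map fun z => p.eval z

lemma mem_criticalValues {p : k[X]} {v : k} :
    v ∈ criticalValues p ↔ ∃ z ∈ (derivative p).roots, p.eval z = v :=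
  Multiset.mem_map

lemma injOn_eval_of_nodup_criticalValues {p : k[X]} (hp : (criticalValues p).Nodup) :
    Set.InjOn p.eval {z | z ∈ (derivative p).roots} :=
  fun z hz w hw h => Multiset.inj_on_of_nodup_map hp z hz w hw h

lemma criticalValues_comp_X_add_C (p : k[X]) (c : k) :
    criticalValues (p.comp (X + C c)) = criticalValues p := by
  have hroots := map_roots_comp_C_mul_X_add_C (derivative p) 1 c isUnit_one
  simp only [C_1, one_mul] at hroots
  simp [criticalValues, derivative_comp, ← hroots]

lemma criticalValues_eq_map_of_derivative_eq {p : k[X]} {a : k} (ha : a ≠ 0) {κ : ι → k}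
    (h : derivative p = C a * ∏ j, (X - C (κ j))) :
    criticalValues p = univ.val.map fun j => p.eval (κ j) := by
  have hroots : (derivative p).roots = univ.val.map κ := by
    rw [h, roots_C_mul _ ha, ← roots_multiset_prod_X_sub_C (univ.val.map κ), Multiset.map_map]
    rfl
  rw [criticalValues, hroots, Multiset.map_map]
  rfl

omit [IsDomain k] in
lemma leadingCoeff_derivative_eq_of_degree_sub_lt {p q : k[X]}
    (hN : (derivative q).natDegree = (derivative p).natDegree)
    (h : (q - p).degree < (derivative p).natDegree) :
    (derivative q).leadingCoeff = (derivative p).leadingCoeff := by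
  have hcoeff : (derivative (q - p)).coeff (derivative p).natDegree = 0 :=
    coeff_eq_zero_of_degree_lt (degree_derivative_le.trans_lt h)
  rw [derivative_sub, coeff_sub, sub_eq_zero] at hcoeff
  rw [leadingCoeff, leadingCoeff, hN, hcoeff]

end CriticalValues

section AlgebraicallyClosed

variable {k : Type*} [Field k] [IsAlgClosed k]

lemma card_criticalValues (p : k[X]) :
    Multiset.card (criticalValues p) = (derivative p).natDegree := by
  rw [criticalValues, Multiset.card_map, IsAlgClosed.card_roots_eq_natDegree]

lemma eval_derivative_derivative_ne_zero_of_nodup_criticalValues {p : k[X]}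
    (hp : (criticalValues p).Nodup) {z : k} (hz : z ∈ (derivative p).roots) :
    (derivative (derivative p)).eval z ≠ 0 := by
  have hsep : (derivative p).Separable :=
    (nodup_roots_iff_of_splits (ne_zero_of_mem_roots hz) (IsAlgClosed.splits _)).1 hp.of_map
  simpa using hsep.aeval_derivative_ne_zero (x := z) (by simpa using isRoot_of_mem_roots hz)

end AlgebraicallyClosed

section MonicProducts

variable {k ι : Type*} [CommRing k] [IsDomain k] [Fintype ι]

omit [IsDomain k] in
lemma degree_sub_lt_of_nextCoeff_eq {p q : k[X]} (hp : p.Monic) (hq : q.Monic)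
    (hdeg : p.natDegree = q.natDegree) (hnext : p.nextCoeff = q.nextCoeff) :
    (p - q).degree < ((p.natDegree - 1 : ℕ) : WithBot ℕ) := by
  rw [degree_lt_iff_coeff_zero]
  intro j hj
  rw [coeff_sub, sub_eq_zero]
  obtain hj | rfl | hj := lt_trichotomy p.natDegree j
  · rw [coeff_eq_zero_of_natDegree_lt hj, coeff_eq_zero_of_natDegree_lt (hdeg ▸ hj)]
  · rw [hp.coeff_natDegree, hdeg, hq.coeff_natDegree]
  · obtain rfl : j = p.natDegree - 1 := by omega
    rwa [nextCoeff_of_natDegree_pos (by omega), nextCoeff_of_natDegree_pos (by omega),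
      ← hdeg] at hnext

lemma degree_prod_X_sub_C_sub_lt {v w : ι → k} (h : ∑ i, v i = ∑ i, w i) :
    (∏ i, (X - C (v i)) - ∏ i, (X - C (w i))).degree <
      ((Fintype.card ι - 1 : ℕ) : WithBot ℕ) := by
  have hcard (u : ι → k) : (∏ i, (X - C (u i))).natDegree = Fintype.card ι :=
    natDegree_finsetProd_X_sub_C_eq_card _ _
  rw [← hcard v]
  refine degree_sub_lt_of_nextCoeff_eq (monic_prod_X_sub_C _ _) (monic_prod_X_sub_C _ _) ?_ ?_
  · rw [hcard, hcard]
  · rw [prod_X_sub_C_nextCoeff, prod_X_sub_C_nextCoeff, h]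

lemma criticalValues_prod_X_sub_C_sub (v : ι → k) (c : k) :
    criticalValues (∏ i, (X - C (v i - c))) = criticalValues (∏ i, (X - C (v i))) := by
  rw [← criticalValues_comp_X_add_C (∏ i, (X - C (v i))) c, Polynomial.prod_comp]
  congr! 2 with i
  simp only [sub_comp, X_comp, C_comp, C_sub]
  ring

lemma finite_setOf_prod_X_sub_C_eq (p : k[X]) :
    {v : ι → k | ∏ i, (X - C (v i)) = p}.Finite := by
  classical
  refine (Set.Finite.pi' fun _ : ι => p.roots.toFinset.finite_toSet).subset ?_
  rintro v rfl i
  simp [prod_eq_zero_iff, sub_eq_zero, eval_prod, (monic_prod_X_sub_C v univ).ne_zero]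

lemma finite_setOf_prod_add_eq [Nonempty ι] (v : ι → k) (c : k) :
    {z : k | ∏ i, (z + v i) = c}.Finite := by
  classical
  let p : k[X] := ∏ i, (X + C (v i)) - C c
  have hp : p ≠ 0 := by
    refine ne_zero_of_natDegree_gt (n := 0) ?_
    simp [p, natDegree_prod_of_monic, monic_X_add_C, Fintype.card_pos]
  refine p.roots.toFinset.finite_toSet.subset fun z hz => ?_
  simpa [p, hp, eval_prod, sub_eq_zero] using hz

end MonicProducts

lemma card_criticalValues_prod_X_sub_C {k ι : Type*} [Field k] [IsAlgClosed k] [CharZero k]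
    [Fintype ι] (v : ι → k) :
    Multiset.card (criticalValues (∏ i, (X - C (v i)))) = Fintype.card ι - 1 := by
  rw [card_criticalValues, natDegree_derivative, natDegree_finsetProd_X_sub_C_eq_card,
    card_univ]

section Topology

lemma exists_mem_nhds_injOn_of_hasStrictFDerivAt {𝕜 E F : Type*} [NontriviallyNormedField 𝕜]
    [CompleteSpace 𝕜] [NormedAddCommGroup E] [NormedSpace 𝕜 E] [FiniteDimensional 𝕜 E]
    [NormedAddCommGroup F] [NormedSpace 𝕜 F] {f : E → F} {f' : E →L[𝕜] F} {x : E}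
    (hf : HasStrictFDerivAt f f' x) (hf' : Function.Injective f') :
    ∃ U ∈ 𝓝 x, Set.InjOn f U := by
  obtain ⟨K, hK, hanti⟩ := f'.toLinearMap.exists_antilipschitzWith (LinearMap.ker_eq_bot.2 hf')
  have hK2 : K⁻¹ / 2 < K⁻¹ := NNReal.half_lt_self (inv_ne_zero hK.ne')
  obtain ⟨U, hU, happrox⟩ := hf.approximates_deriv_on_nhds (c := K⁻¹ / 2) (Or.inr (by positivity))
  refine ⟨U, hU, Set.injOn_iff_injective.2 ?_⟩
  have := ((hanti.domRestrict U).add_lipschitzWith happrox.lipschitz_sub hK2).injective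
  convert! this using 1
  ext y
  simp

lemma eq_of_continuous_of_forall_mem_finite {I Y : Type*} [TopologicalSpace I]
    [PreconnectedSpace I] [TopologicalSpace Y] [T1Space Y] {g : I → Y} (hg : Continuous g)
    {T : Set Y} (hT : T.Finite) (h : ∀ t, g t ∈ T) (s t : I) : g s = g t := by
  by_contra hne
  exact (isPreconnected_range hg).infinite_of_nontrivial ⟨_, ⟨s, rfl⟩, _, ⟨t, rfl⟩, hne⟩
    (hT.subset (Set.range_subset_iff.2 h))

end Topology

section Perturbation

open scoped ContDiff

variable {𝕜 ι : Type*} [NontriviallyNormedField 𝕜] [Fintype ι]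

lemma contDiff_eval_add_sum (p : 𝕜[X]) (b : ι → 𝕜[X]) :
    ContDiff 𝕜 ω fun x : (ι → 𝕜) × 𝕜 => (p + ∑ i, C (x.1 i) * b i).eval x.2 := by
  have heval (q : 𝕜[X]) : ContDiff 𝕜 ω fun x : (ι → 𝕜) × 𝕜 => q.eval x.2 := by
    have h := (q.contDiff_aeval (𝕜 := 𝕜) ω).comp (contDiff_snd (E := ι → 𝕜) (F := 𝕜))
    simpa only [coe_aeval_eq_eval, Function.comp_def] using h
  simp only [eval_add, eval_finsetSum, eval_C_mul]
  fun_prop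

lemma hasDerivAt_eval_add_C_mul (p r : 𝕜[X]) (z w : 𝕜) :
    HasDerivAt (fun s : 𝕜 => (p + C s * r).eval (z + s * w))
      (r.eval z + (derivative p).eval z * w) 0 := by
  have hz : HasDerivAt (fun s : 𝕜 => z + s * w) w 0 := by
    simpa using ((hasDerivAt_id (0 : 𝕜)).mul_const w).const_add z
  have heval (q : 𝕜[X]) :
      HasDerivAt (fun s : 𝕜 => q.eval (z + s * w)) ((derivative q).eval z * w) 0 :=
    HasDerivAt.comp_of_eq (0 : 𝕜) (q.hasDerivAt z) hz (by simp)
  simp only [eval_add, eval_C_mul]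
  refine ((heval p).add ((hasDerivAt_id (0 : 𝕜)).mul (heval r))).congr_deriv ?_
  simp [add_comm]

variable [DecidableEq ι]

/-- The polynomials that differ from `p` in degree less than `card ι`, parametrised by the values
`r` of the difference at the pairwise distinct nodes `d`. -/
noncomputable def perturb (p : 𝕜[X]) (d r : ι → 𝕜) : 𝕜[X] :=
  p + Lagrange.interpolate univ d r

lemma perturb_zero (p : 𝕜[X]) (d : ι → 𝕜) : perturb p d 0 = p := by
  simp [perturb]

lemma perturb_eval_sub_eval {d : ι → 𝕜} (hd : Function.Injective d) {p q : 𝕜[X]}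
    (h : (q - p).degree < (Fintype.card ι : WithBot ℕ)) :
    perturb p d (fun i => q.eval (d i) - p.eval (d i)) = q := by
  have hinterp := Lagrange.eq_interpolate (s := univ) (v := d) hd.injOn (by simpa using h)
  simp only [eval_sub] at hinterp
  rw [perturb, ← hinterp, add_sub_cancel]

lemma contDiff_eval_perturb (p : 𝕜[X]) (d : ι → 𝕜) :
    ContDiff 𝕜 ω fun x : (ι → 𝕜) × 𝕜 => (perturb p d x.1).eval x.2 := by
  simpa only [perturb, Lagrange.interpolate_apply] using contDiff_eval_add_sum p _

lemma contDiff_eval_derivative_perturb (p : 𝕜[X]) (d : ι → 𝕜) :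
    ContDiff 𝕜 ω fun x : (ι → 𝕜) × 𝕜 => (derivative (perturb p d x.1)).eval x.2 := by
  simpa only [perturb, Lagrange.interpolate_apply, derivative_add, derivative_sum,
    derivative_C_mul] using contDiff_eval_add_sum (derivative p) _

/-- The values and the slopes of the polynomial with parameter `x.1` at the variable points `x.2`.
The slopes vanish where these points are critical, and then the values are critical values. -/
noncomputable def criticalMap (p : 𝕜[X]) (d : ι → 𝕜) (x : (ι → 𝕜) × (ι → 𝕜)) :
    (ι → 𝕜) × (ι → 𝕜) :=
  (fun i => (perturb p d x.1).eval (x.2 i), fun i => (derivative (perturb p d x.1)).eval (x.2 i))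

lemma contDiff_criticalMap (p : 𝕜[X]) (d : ι → 𝕜) : ContDiff 𝕜 ω (criticalMap p d) := by
  have hpoint (i : ι) : ContDiff 𝕜 ω fun x : (ι → 𝕜) × (ι → 𝕜) => (x.1, x.2 i) := by fun_prop
  exact (contDiff_pi.2 fun i => (contDiff_eval_perturb p d).comp (hpoint i)).prodMk
    (contDiff_pi.2 fun i => (contDiff_eval_derivative_perturb p d).comp (hpoint i))

lemma hasLineDerivAt_criticalMap (p : 𝕜[X]) {d : ι → 𝕜} (hd : Function.Injective d)
    (r w : ι → 𝕜) :
    HasLineDerivAt 𝕜 (criticalMap p d)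
      (fun i => r i + (derivative p).eval (d i) * w i,
        fun i => (derivative (Lagrange.interpolate univ d r)).eval (d i) +
          (derivative (derivative p)).eval (d i) * w i) (0, d) (r, w) := by
  have hline (s : 𝕜) : perturb p d (s • r) = p + C s * Lagrange.interpolate univ d r := by
    rw [perturb, map_smul, smul_eq_C_mul]
  refine HasDerivAt.prodMk (hasDerivAt_pi.2 fun i => ?_) (hasDerivAt_pi.2 fun i => ?_)
  · have h := hasDerivAt_eval_add_C_mul p (Lagrange.interpolate univ d r) (d i) (w i)
    rw [Lagrange.eval_interpolate_at_node r hd.injOn (mem_univ i)] at h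
    simpa [hline] using h
  · have h := hasDerivAt_eval_add_C_mul (derivative p)
      (derivative (Lagrange.interpolate univ d r)) (d i) (w i)
    simpa [hline] using h

lemma fderiv_criticalMap_injective {p : 𝕜[X]} {d : ι → 𝕜} (hd : Function.Injective d)
    (hcrit : ∀ i, (derivative p).eval (d i) = 0)
    (hsimple : ∀ i, (derivative (derivative p)).eval (d i) ≠ 0) :
    Function.Injective (fderiv 𝕜 (criticalMap p d) (0, d)) := by
  refine (injective_iff_map_eq_zero _).2 ?_
  rintro ⟨r, w⟩ hker
  have hdiff : DifferentiableAt 𝕜 (criticalMap p d) (0, d) :=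
    (contDiff_criticalMap p d).differentiable (by simp) _
  rw [← hdiff.lineDeriv_eq_fderiv, (hasLineDerivAt_criticalMap p hd r w).lineDeriv,
    Prod.mk_eq_zero, funext_iff, funext_iff] at hker
  obtain ⟨hvalues, hslopes⟩ := hker
  obtain rfl : r = 0 := funext fun i => by simpa [hcrit i] using hvalues i
  obtain rfl : w = 0 := funext fun i => by simpa [hsimple i] using hslopes i
  rfl

lemma exists_mem_nhds_injOn_criticalMap [CompleteSpace 𝕜] {p : 𝕜[X]} {d : ι → 𝕜}
    (hd : Function.Injective d) (hcrit : ∀ i, (derivative p).eval (d i) = 0)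
    (hsimple : ∀ i, (derivative (derivative p)).eval (d i) ≠ 0) :
    ∃ U ∈ 𝓝 ((0 : ι → 𝕜), d), Set.InjOn (criticalMap p d) U :=
  exists_mem_nhds_injOn_of_hasStrictFDerivAt
    (contDiff_criticalMap p d).contDiffAt.analyticAt.hasStrictFDerivAt
    (fderiv_criticalMap_injective hd hcrit hsimple)

end Perturbation

section ContinuityOfCriticalPoints

variable {𝕜 α : Type*} {F : Filter α}

lemma exists_mem_roots_norm_sub_lt [NormedField 𝕜] {p : 𝕜[X]} (hp : p.Splits) {z : 𝕜} {ε : ℝ}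
    (hε : 0 ≤ ε) (h : ‖p.eval z‖ < ‖p.leadingCoeff‖ * ε ^ p.natDegree) :
    ∃ w ∈ p.roots, ‖z - w‖ < ε := by
  by_contra! hfar
  refine h.not_ge ?_
  calc ‖p.leadingCoeff‖ * ε ^ p.natDegree
      = ‖p.leadingCoeff‖ * (p.roots.map fun _ => ε).prod := by
        simp [hp.natDegree_eq_card_roots]
    _ ≤ ‖p.leadingCoeff‖ * (p.roots.map fun w => ‖z - w‖).prod := by
        gcongr
        exact Multiset.prod_map_le_prod_map₀ _ _ (fun _ _ => hε) hfar
    _ = ‖p.eval z‖ := by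
        rw [hp.eval_eq_prod_roots, norm_mul]
        exact congrArg _ (p.roots.prod_hom' (normHom : 𝕜 →*₀ ℝ) fun w => z - w)

lemma eventually_exists_mem_roots [NormedField 𝕜] {q : α → 𝕜[X]} (hq : ∀ t, (q t).Splits)
    {N : ℕ} (hN : ∀ t, (q t).natDegree = N) {a : 𝕜} (ha : a ≠ 0)
    (hlead : ∀ t, (q t).leadingCoeff = a) {z : 𝕜}
    (hlim : Tendsto (fun t => (q t).eval z) F (𝓝 0)) {U : Set 𝕜} (hU : U ∈ 𝓝 z) :
    ∀ᶠ t in F, ∃ w ∈ (q t).roots, w ∈ U := by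
  obtain ⟨ε, hε, hball⟩ := Metric.mem_nhds_iff.1 hU
  have hbound : 0 < ‖a‖ * ε ^ N := by positivity
  filter_upwards [hlim.norm.eventually_lt_const (by simpa using hbound)] with t ht
  obtain ⟨w, hw, hwz⟩ := exists_mem_roots_norm_sub_lt (hq t) hε.le (by rwa [hlead, hN])
  exact ⟨w, hw, hball (by rwa [Metric.mem_ball, dist_comm, dist_eq_norm])⟩

lemma tendsto_criticalPoint [NormedField 𝕜] {q : α → 𝕜[X]} {R : Multiset 𝕜} (hR : R.Nodup)
    (hq : ∀ t, criticalValues (q t) = R) {z v : 𝕜}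
    (heval : Tendsto (fun y : α × 𝕜 => (q y.1).eval y.2) (F ×ˢ 𝓝 z) (𝓝 v))
    (hroot : ∀ U ∈ 𝓝 z, ∀ᶠ t in F, ∃ w ∈ (derivative (q t)).roots, w ∈ U)
    {κ : α → 𝕜} (hκ : ∀ t, κ t ∈ (derivative (q t)).roots) (hκv : ∀ t, (q t).eval (κ t) = v) :
    Tendsto κ F (𝓝 z) := by
  classical
  -- The critical values of `q t` form a fixed finite set, so a critical point of `q t` close to `z`
  -- must have the value `v`, and `κ t` is the only critical point with this value.
  have hisolated : ((R.toFinset : Set 𝕜) \ {v})ᶜ ∈ 𝓝 v :=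
    (R.toFinset.finite_toSet.sdiff).isClosed.compl_mem_nhds (by simp)
  obtain ⟨P, hP, U, hU, hPU⟩ := eventually_prod_iff.1 (heval.eventually hisolated)
  refine tendsto_iff_forall_eventually_mem.2 fun V hV => ?_
  filter_upwards [hP, hroot (V ∩ {w | U w}) (inter_mem hV hU)] with t ht ⟨w, hw, hwV, hwU⟩
  have hwR : (q t).eval w ∈ R := hq t ▸ mem_criticalValues.2 ⟨w, hw, rfl⟩
  have hwv : (q t).eval w = v := by
    by_contra hne
    exact hPU ht hwU ⟨by simpa using hwR, hne⟩
  have hκw : κ t = w :=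
    injOn_eval_of_nodup_criticalValues (hq t ▸ hR) (hκ t) hw ((hκv t).trans hwv.symm)
  rwa [hκw]

end ContinuityOfCriticalPoints

section Rigidity

variable {𝕜 : Type*} [NontriviallyNormedField 𝕜] [IsAlgClosed 𝕜]

lemma tendsto_criticalPoint_perturb {α ι : Type*} [Fintype ι] [DecidableEq ι] {F : Filter α}
    {p : 𝕜[X]} (hp : (criticalValues p).Nodup) {d : ι → 𝕜} {r : α → ι → 𝕜}
    (hr : Tendsto r F (𝓝 0)) (hcrit : ∀ t, criticalValues (perturb p d (r t)) = criticalValues p)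
    (hdeg : ∀ t, (perturb p d (r t) - p).degree < Multiset.card (criticalValues p))
    {z : 𝕜} (hz : z ∈ (derivative p).roots) {κ : α → 𝕜}
    (hκ : ∀ t, κ t ∈ (derivative (perturb p d (r t))).roots)
    (hκv : ∀ t, (perturb p d (r t)).eval (κ t) = p.eval z) :
    Tendsto κ F (𝓝 z) := by
  have hN (t : α) : (derivative (perturb p d (r t))).natDegree = (derivative p).natDegree := by
    rw [← card_criticalValues, hcrit, card_criticalValues]
  have hlead (t : α) :
      (derivative (perturb p d (r t))).leadingCoeff = (derivative p).leadingCoeff :=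
    leadingCoeff_derivative_eq_of_degree_sub_lt (hN t) (card_criticalValues p ▸ hdeg t)
  have heval : Tendsto (fun y : α × 𝕜 => (perturb p d (r y.1)).eval y.2) (F ×ˢ 𝓝 z)
      (𝓝 (p.eval z)) := by
    have h := (contDiff_eval_perturb p d).continuous.tendsto (0, z)
    rw [perturb_zero, nhds_prod_eq] at h
    exact h.comp (hr.prodMap tendsto_id)
  have hslope : Tendsto (fun t => (derivative (perturb p d (r t))).eval z) F (𝓝 0) := by
    have h := (contDiff_eval_derivative_perturb p d).continuous.tendsto (0, z)
    rw [perturb_zero, (isRoot_of_mem_roots hz).eq_zero, nhds_prod_eq] at h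
    exact h.comp (hr.prodMk tendsto_const_nhds)
  refine tendsto_criticalPoint hp hcrit heval (fun U hU => ?_) hκ hκv
  exact eventually_exists_mem_roots (fun t => IsAlgClosed.splits _) hN
    (leadingCoeff_ne_zero.2 (ne_zero_of_mem_roots hz)) hlead hslope hU

theorem eventually_eq_of_criticalValues_eq [CompleteSpace 𝕜] {α : Type*} {F : Filter α}
    {p : 𝕜[X]} {q : α → 𝕜[X]} (hp : (criticalValues p).Nodup)
    (hq : ∀ t, criticalValues (q t) = criticalValues p)
    (hdeg : ∀ t, (q t - p).degree < Multiset.card (criticalValues p))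
    (hlim : ∀ z, Tendsto (fun t => (q t).eval z) F (𝓝 (p.eval z))) :
    ∀ᶠ t in F, q t = p := by
  classical
  let d : (derivative p).roots.toFinset → 𝕜 := (↑)
  have hd : Function.Injective d := Subtype.val_injective
  have hroot (i) : d i ∈ (derivative p).roots := Multiset.mem_toFinset.1 i.2
  have hcard : Multiset.card (criticalValues p) = Fintype.card (derivative p).roots.toFinset := by
    rw [Fintype.card_coe, Multiset.toFinset_card_of_nodup hp.of_map, criticalValues,
      Multiset.card_map]
  let r (t : α) (i : (derivative p).roots.toFinset) : 𝕜 := (q t).eval (d i) - p.eval (d i)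
  have hr : Tendsto r F (𝓝 0) := tendsto_pi_nhds.2 fun i => by
    simpa using (hlim (d i)).sub_const (p.eval (d i))
  have hqr (t : α) : perturb p d (r t) = q t := perturb_eval_sub_eval hd (hcard ▸ hdeg t)
  have hlift (t : α) (i) : ∃ z ∈ (derivative (q t)).roots, (q t).eval z = p.eval (d i) :=
    mem_criticalValues.1 (hq t ▸ mem_criticalValues.2 ⟨d i, hroot i, rfl⟩)
  choose κ hκ hκv using hlift
  have hκlim : Tendsto κ F (𝓝 d) := tendsto_pi_nhds.2 fun i =>
    tendsto_criticalPoint_perturb hp hr (fun t => by rw [hqr, hq])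
      (fun t => by simpa only [hqr] using hdeg t) (hroot i)
      (fun t => by simpa only [hqr] using hκ t i) (fun t => by simpa only [hqr] using hκv t i)
  obtain ⟨U, hU, hinj⟩ := exists_mem_nhds_injOn_criticalMap hd
    (fun i => isRoot_of_mem_roots (hroot i))
    (fun i => eval_derivative_derivative_ne_zero_of_nodup_criticalValues hp (hroot i))
  filter_upwards [(hr.prodMk_nhds hκlim) hU] with t ht
  have hsame : criticalMap p d (r t, κ t) = criticalMap p d (0, d) := by
    simp only [criticalMap, hqr, perturb_zero, hκv, (isRoot_of_mem_roots (hκ t _)).eq_zero,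
      (isRoot_of_mem_roots (hroot _)).eq_zero]
  have hrt : r t = 0 := congrArg Prod.fst (hinj ht (mem_of_mem_nhds hU) hsame)
  rw [← hqr t, hrt, perturb_zero]

theorem eq_of_criticalValues_eq [CompleteSpace 𝕜] {I : Type*} [TopologicalSpace I]
    [PreconnectedSpace I] {q : I → 𝕜[X]} (hcont : ∀ z, Continuous fun t => (q t).eval z)
    {R : Multiset 𝕜} (hR : R.Nodup) (hq : ∀ t, criticalValues (q t) = R)
    (hdeg : ∀ s t, (q s - q t).degree < Multiset.card R) (s t : I) : q s = q t := by
  have hconst : IsLocallyConstant q := (IsLocallyConstant.iff_eventually_eq q).2 fun x =>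
    eventually_eq_of_criticalValues_eq (hq x ▸ hR) (fun y => (hq y).trans (hq x).symm)
      (fun y => hq x ▸ hdeg y x) (fun z => (hcont z).tendsto x)
  exact hconst.apply_eq_of_preconnectedSpace s t

end Rigidity

section Families

variable {𝕜 I ι : Type*} [NontriviallyNormedField 𝕜] [CompleteSpace 𝕜] [IsAlgClosed 𝕜] [CharZero 𝕜]
  [TopologicalSpace I] [PreconnectedSpace I] [Fintype ι] {l : I → ι → 𝕜} {R : Multiset 𝕜}

lemma balance_eq_of_criticalValues_eq (hl : Continuous l) (hR : R.Nodup)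
    (hcrit : ∀ t, criticalValues (∏ i, (X - C (l t i))) = R) (s t : I) :
    Fintype.balance (l s) = Fintype.balance (l t) := by
  have hb : Continuous fun t => Fintype.balance (l t) := by
    unfold Fintype.balance Finset.expect
    fun_prop
  let q (t : I) : 𝕜[X] := ∏ i, (X - C (Fintype.balance (l t) i))
  have hcont (z : 𝕜) : Continuous fun t => (q t).eval z := by
    simp only [q, eval_prod, eval_sub, eval_X, eval_C]
    fun_prop
  have hq (t : I) : criticalValues (q t) = R :=
    (criticalValues_prod_X_sub_C_sub (l t) _).trans (hcrit t)
  have hdeg (s t : I) : (q s - q t).degree < Multiset.card R := by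
    rw [← hq s, card_criticalValues_prod_X_sub_C]
    exact degree_prod_X_sub_C_sub_lt (by simp only [Fintype.sum_balance])
  have hqs (t : I) : q t = q s := eq_of_criticalValues_eq hcont hR hq hdeg t s
  exact eq_of_continuous_of_forall_mem_finite hb (finite_setOf_prod_X_sub_C_eq (q s)) hqs s t

theorem stmt_14_general (hl : Continuous l) {c : 𝕜} (hprod : ∀ t, ∏ i, l t i = c) (hR : R.Nodup)
    (hcrit : ∀ t, criticalValues (∏ i, (X - C (l t i))) = R) (s t : I) : l s = l t := by
  obtain hι | hι := isEmpty_or_nonempty ι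
  · exact Subsingleton.elim _ _
  have hbalance (t : I) : Fintype.balance (l t) = Fintype.balance (l s) :=
    balance_eq_of_criticalValues_eq hl hR hcrit t s
  let e (t : I) : 𝕜 := univ.expect (l t)
  have hsplit (t : I) (i : ι) : l t i = e t + Fintype.balance (l s) i := by
    rw [← hbalance t, Fintype.balance_apply, add_sub_cancel]
  have he : Continuous e := by
    unfold e Finset.expect
    fun_prop
  have heq : e s = e t := eq_of_continuous_of_forall_mem_finite he
    (finite_setOf_prod_add_eq (Fintype.balance (l s)) c)
    (fun t => (prod_congr rfl fun i _ => (hsplit t i).symm).trans (hprod t)) s t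
  ext i
  rw [hsplit s, hsplit t, heq]

end Families

/-- A continuous family `t ∈ [0,1] ↦ λ(t)` of injective tuples of
nonzero complex numbers with product one, whose polynomials `Q_{λ(t)}` have a
constant multiset of critical values consisting of `n−1` pairwise distinct
nonzero numbers, is trivial up to permutations and `n`-th roots of unity. -/
theorem stmt_14 (n : ℕ) (hn : 2 ≤ n) (l : ℝ → Fin n → ℂ)
    (hcont : ContinuousOn l (Set.Icc 0 1))
    (hinj : ∀ t ∈ Set.Icc (0 : ℝ) 1, Function.Injective (l t))
    (hne : ∀ t ∈ Set.Icc (0 : ℝ) 1, ∀ i, l t i ≠ 0)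
    (hprod : ∀ t ∈ Set.Icc (0 : ℝ) 1, ∏ i, l t i = 1)
    (R : Multiset ℂ) (hRcard : Multiset.card R = n - 1)
    (hRnd : R.Nodup) (hR0 : (0 : ℂ) ∉ R)
    (hcrit : ∀ t ∈ Set.Icc (0 : ℝ) 1, ∃ κ : Fin (n - 1) → ℂ,
      Polynomial.derivative (∏ j : Fin n, (Polynomial.X - Polynomial.C (l t j))) =
        Polynomial.C (n : ℂ) *
          ∏ j : Fin (n - 1), (Polynomial.X - Polynomial.C (κ j)) ∧
      (Finset.univ.val.map (fun j : Fin (n - 1) =>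
        (∏ i : Fin n, (Polynomial.X - Polynomial.C (l t i))).eval (κ j)) :
          Multiset ℂ) = R) :
    ∀ t ∈ Set.Icc (0 : ℝ) 1, ∃ ω : ℂ, ω ^ n = 1 ∧ ∃ π : Equiv.Perm (Fin n),
      ∀ i, l t i = ω * l 0 (π i) := by
  have : PreconnectedSpace (Set.Icc (0 : ℝ) 1) := Subtype.preconnectedSpace isPreconnected_Icc
  have hn0 : (n : ℂ) ≠ 0 := by exact_mod_cast (by omega : n ≠ 0)
  have hvalues (t : Set.Icc (0 : ℝ) 1) : criticalValues (∏ i, (X - C (l t i))) = R := by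
    obtain ⟨κ, hκ, hκR⟩ := hcrit t t.2
    rw [criticalValues_eq_map_of_derivative_eq hn0 hκ, hκR]
  intro t ht
  have hconst : l t = l 0 := stmt_14_general (I := Set.Icc (0 : ℝ) 1)
    hcont.domRestrict (fun t => hprod t t.2) hRnd hvalues ⟨t, ht⟩ ⟨0, by simp⟩
  exact ⟨1, one_pow n, Equiv.refl _, fun i => by simp [hconst]⟩
end
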